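/- Let R be a commutative Noetherian ring and M a finitely generated R-module with no embedded primes. Given natural numbers n_𝔭 ≤ ℓ_𝔭(M) for each associated prime 𝔭 of M, there exists a submodule N ⊆ M with ℓ_𝔭(N) = n_𝔭 for all primes 𝔭. (Special case: for each associated prime 𝔭 of M there is a submodule generated by one element isomorphic to R/𝔭.) -/

import Mathlib

/-- The `𝔭`-torsion submodule `H⁰_𝔭(M)` of the localization `M_𝔭`: the elements of
`LocalizedModule 𝔭.primeCompl M` annihilated by some power of `𝔭 R_𝔭`. -/
noncomputable def pTorsion {R : Type*} [CommRing R] (p : Ideal R) [p.IsPrime]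
    (M : Type*) [AddCommGroup M] [Module R M] :
    Submodule (Localization.AtPrime p) (LocalizedModule p.primeCompl M) :=
  ⨆ n : ℕ,
    Submodule.torsionBySet (Localization.AtPrime p) (LocalizedModule p.primeCompl M)
      ((Ideal.map (algebraMap R (Localization.AtPrime p)) p ^ n :
        Ideal (Localization.AtPrime p)) : Set (Localization.AtPrime p))

/-- The length of a module: the Krull dimension of its lattice of submodules
(`⊥` never occurs; the value is `⊤` when there are chains of unbounded length). -/
noncomputable def modLength (A : Type*) (M : Type*) [Ring A] [AddCommGroup M] [Module A M] :
    WithBot ℕ∞ :=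
  Order.krullDim (Submodule A M)

/-- The local multiplicity `ℓ_𝔭(M)`: the length over `R_𝔭` of the `𝔭`-torsion submodule
of the localization `M_𝔭`. -/
noncomputable def lmult {R : Type*} [CommRing R] (p : PrimeSpectrum R)
    (M : Type*) [AddCommGroup M] [Module R M] : WithBot ℕ∞ :=
  modLength (Localization.AtPrime p.asIdeal) (pTorsion p.asIdeal M)

/-!
`ℓ_𝔭` is subadditive on short exact sequences because `H⁰_𝔭` is left exact, and `ℓ_𝔮(R ⧸ 𝔭)` is at
most one for `𝔮 = 𝔭` and zero otherwise. Take `N` maximal among the submodules with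
`ℓ_𝔮(N) ≤ n_𝔮` for all `𝔮`. If `ℓ_𝔭(N) < n_𝔭 ≤ ℓ_𝔭(M)` for some `𝔭`, then `ℓ_𝔭(M ⧸ N) ≠ 0`, so
`M ⧸ N` contains a copy of `R ⧸ 𝔭`. Its preimage in `M` strictly contains `N` and exceeds `N` in
multiplicity only at `𝔭`, by at most one, contradicting maximality.
-/

theorem exists_smul_ne_zero_and_forall_smul_smul_eq_zero {R M : Type*} [CommSemiring R]
    [AddCommMonoid M] [Module R M] {I : Ideal R} {y : M} (hy : y ≠ 0) {k : ℕ}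
    (hk : ∀ a ∈ I ^ k, a • y = 0) : ∃ a : R, a • y ≠ 0 ∧ ∀ r ∈ I, r • a • y = 0 := by
  induction k with
  | zero => exact absurd (by simpa using hk 1 (by simp)) hy
  | succ k ih =>
    by_cases h : ∀ a ∈ I ^ k, a • y = 0
    · exact ih h
    · push Not at h
      obtain ⟨a, ha, hay⟩ := h
      refine ⟨a, hay, fun r hr ↦ ?_⟩
      rw [smul_smul]
      exact hk _ (pow_succ' I k ▸ Ideal.mul_mem_mul hr ha)

theorem length_le_add_of_exact {A X Y Z : Type*} [Ring A] [AddCommGroup X] [Module A X]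
    [AddCommGroup Y] [Module A Y] [AddCommGroup Z] [Module A Z] {f : X →ₗ[A] Y} {g : Y →ₗ[A] Z}
    (H : Function.Exact f g) :
    Module.length A Y ≤ Module.length A X + Module.length A Z := by
  rw [Module.length_eq_add_of_exact g.ker.subtype g.rangeRestrict g.ker.subtype_injective
    g.surjective_rangeRestrict (LinearMap.exact_iff.2 (by simp))]
  refine add_le_add ?_ (Module.length_le_of_injective _ g.range.subtype_injective)
  rw [LinearMap.exact_iff.1 H]
  exact Module.length_le_of_surjective _ f.surjective_rangeRestrict

theorem localizedModule_mk_eq_zero_iff {R M : Type*} [CommSemiring R] [AddCommMonoid M]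
    [Module R M] {S : Submonoid R} {m : M} {s : S} :
    LocalizedModule.mk m s = 0 ↔ ∃ t ∈ S, t • m = 0 := by
  rw [IsLocalizedModule.mk_eq_mk', IsLocalizedModule.mk'_eq_zero']
  simp [Submonoid.smul_def]

section LocalMultiplicity

open Module

variable {R : Type*} [CommRing R] {M N P : Type*} [AddCommGroup M] [Module R M]
  [AddCommGroup N] [Module R N] [AddCommGroup P] [Module R P]

theorem mem_pTorsion_iff {p : Ideal R} [p.IsPrime] {x : LocalizedModule p.primeCompl M} :
    x ∈ pTorsion p M ↔ ∃ k : ℕ, ∀ a ∈ p ^ k, a • x = 0 := by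
  rw [pTorsion, Submodule.mem_iSup_of_directed _ (Monotone.directed_le fun i j hij ↦
    Submodule.torsionBySet_le_torsionBySet_pow i j hij _)]
  refine exists_congr fun k ↦ ?_
  rw [← Ideal.map_pow, Ideal.map, ← Submodule.torsionBySet_eq_torsionBySet_span]
  simp

theorem map_mem_pTorsion {p : Ideal R} [p.IsPrime] (f : M →ₗ[R] N)
    {x : LocalizedModule p.primeCompl M} (hx : x ∈ pTorsion p M) :
    LocalizedModule.map p.primeCompl f x ∈ pTorsion p N := by
  obtain ⟨k, hk⟩ := mem_pTorsion_iff.1 hx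
  refine mem_pTorsion_iff.2 ⟨k, fun a ha ↦ ?_⟩
  rw [← LinearMap.map_smul_of_tower, hk a ha, map_zero]

theorem mem_pTorsion_of_map_mem {p : Ideal R} [p.IsPrime] {f : M →ₗ[R] N}
    (hf : Function.Injective f) {x : LocalizedModule p.primeCompl M}
    (hx : LocalizedModule.map p.primeCompl f x ∈ pTorsion p N) : x ∈ pTorsion p M := by
  obtain ⟨k, hk⟩ := mem_pTorsion_iff.1 hx
  refine mem_pTorsion_iff.2 ⟨k, fun a ha ↦ LocalizedModule.map_injective p.primeCompl f hf ?_⟩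
  rw [LinearMap.map_smul_of_tower, hk a ha, map_zero]

theorem lmult_eq_length (p : PrimeSpectrum R) :
    lmult p M = length (Localization.AtPrime p.asIdeal) (pTorsion p.asIdeal M) :=
  (coe_length _ _).symm

theorem lmult_le_add_of_exact (p : PrimeSpectrum R) {f : M →ₗ[R] N} {g : N →ₗ[R] P}
    (hf : Function.Injective f) (H : Function.Exact f g) :
    lmult p N ≤ lmult p M + lmult p P := by
  have hexact : Function.Exact
      ((LocalizedModule.map p.asIdeal.primeCompl f).restrict fun _ ↦ map_mem_pTorsion f)
      ((LocalizedModule.map p.asIdeal.primeCompl g).restrict fun _ ↦ map_mem_pTorsion g) := by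
    rintro ⟨y, hy⟩
    rw [Subtype.ext_iff, LinearMap.coe_restrict_apply, ZeroMemClass.coe_zero]
    refine (LocalizedModule.map_exact p.asIdeal.primeCompl f g H y).trans ⟨?_, ?_⟩
    · rintro ⟨x, rfl⟩
      exact ⟨⟨x, mem_pTorsion_of_map_mem hf hy⟩, rfl⟩
    · rintro ⟨x, hx⟩
      exact ⟨x, congrArg Subtype.val hx⟩
  simp only [lmult_eq_length]
  exact_mod_cast length_le_add_of_exact hexact

theorem lmult_eq_zero_of_subsingleton [Subsingleton M] (p : PrimeSpectrum R) :
    lmult p M = 0 := by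
  have : Subsingleton (LocalizedModule p.asIdeal.primeCompl M) :=
    LocalizedModule.subsingleton_iff.2 fun m ↦ ⟨1, one_mem _, Subsingleton.elim _ _⟩
  rw [lmult_eq_length, length_eq_zero, WithBot.coe_zero]

theorem exists_smul_ne_zero_of_lmult_ne_zero {p : PrimeSpectrum R} (h : lmult p M ≠ 0) :
    ∃ m : M, (∀ t ∉ p.asIdeal, t • m ≠ 0) ∧ ∀ r ∈ p.asIdeal, ∃ t ∉ p.asIdeal, t • r • m = 0 := by
  have hne : pTorsion p.asIdeal M ≠ ⊥ := fun hbot ↦ h <| by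
    rw [lmult_eq_length, hbot, length_bot, WithBot.coe_zero]
  obtain ⟨y, hy, hy0⟩ := Submodule.exists_mem_ne_zero_of_ne_bot hne
  obtain ⟨k, hk⟩ := mem_pTorsion_iff.1 hy
  obtain ⟨a, hay, hpa⟩ := exists_smul_ne_zero_and_forall_smul_smul_eq_zero hy0 hk
  obtain ⟨⟨m, s⟩, hms⟩ : ∃ z : M × p.asIdeal.primeCompl, LocalizedModule.mk z.1 z.2 = a • y := by
    induction a • y using LocalizedModule.induction_on with
    | h m s => exact ⟨(m, s), rfl⟩
  simp only [← hms, LocalizedModule.smul'_mk, ne_eq, localizedModule_mk_eq_zero_iff] at hay hpa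
  exact ⟨m, fun t ht htm ↦ hay ⟨t, ht, htm⟩, hpa⟩

theorem exists_injective_quotient_of_lmult_ne_zero [IsNoetherian R M] {p : PrimeSpectrum R}
    (h : lmult p M ≠ 0) : ∃ f : R ⧸ p.asIdeal →ₗ[R] M, Function.Injective f := by
  obtain ⟨m, hm, hpm⟩ := exists_smul_ne_zero_of_lmult_ne_zero h
  -- Finite generation of `𝔭m` turns the denominators killing each `r • m` into a single one.
  let pm : Submodule R M := Submodule.map (LinearMap.toSpanSingleton R M m) p.asIdeal
  have hsupp : p ∉ support R pm := by
    rw [notMem_support_iff']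
    rintro ⟨_, r, hr, rfl⟩
    obtain ⟨t, ht, htr⟩ := hpm r hr
    exact ⟨t, ht, Subtype.ext htr⟩
  obtain ⟨t, htpm, ht⟩ := SetLike.not_le_iff_exists.1 (mt mem_support_iff_of_finite.2 hsupp)
  have hker : p.asIdeal = (LinearMap.toSpanSingleton R M (t • m)).ker := by
    ext r
    rw [LinearMap.mem_ker, LinearMap.toSpanSingleton_apply]
    constructor
    · intro hr
      rw [smul_comm]
      exact congrArg Subtype.val (mem_annihilator.1 htpm ⟨r • m, r, hr, rfl⟩)
    · intro hr
      by_contra hrp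
      exact hm (r * t) (p.asIdeal.primeCompl.mul_mem hrp ht) (by rw [mul_smul, hr])
  exact ⟨Submodule.liftQ _ _ hker.le, LinearMap.ker_eq_bot.1 (Submodule.ker_liftQ_eq_bot' _ _ hker)⟩

theorem lmult_quotient_of_ne {p q : PrimeSpectrum R} (hqp : q ≠ p) :
    lmult q (R ⧸ p.asIdeal) = 0 := by
  by_contra h
  obtain ⟨c, hc, hqc⟩ := exists_smul_ne_zero_of_lmult_ne_zero h
  obtain ⟨c, rfl⟩ := Ideal.Quotient.mk_surjective c
  simp only [ne_eq, Algebra.smul_def, Ideal.Quotient.algebraMap_eq, ← map_mul,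
    Ideal.Quotient.eq_zero_iff_mem, p.2.mul_mem_iff_mem_or_mem, not_or] at hc hqc
  refine hqp (PrimeSpectrum.ext (le_antisymm (fun r hr ↦ ?_) fun r hr ↦ ?_))
  · obtain ⟨t, ht, htr⟩ := hqc r hr
    have := hc t ht
    tauto
  · by_contra hrq
    exact (hc r hrq).1 hr

theorem lmult_quotient_le_one (p : PrimeSpectrum R) : lmult p (R ⧸ p.asIdeal) ≤ 1 := by
  let A := Localization.AtPrime p.asIdeal
  let φ := LinearMap.toSpanSingleton A (LocalizedModule p.asIdeal.primeCompl (R ⧸ p.asIdeal))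
    (LocalizedModule.mk 1 1)
  have hker : IsLocalRing.maximalIdeal A ≤ φ.ker := by
    rw [← Localization.AtPrime.map_eq_maximalIdeal, Ideal.map_le_iff_le_comap]
    intro r hr
    have hr0 : r • (1 : R ⧸ p.asIdeal) = 0 := by
      rwa [Algebra.smul_def, mul_one, Ideal.Quotient.algebraMap_eq, Ideal.Quotient.eq_zero_iff_mem]
    rw [Ideal.mem_comap, LinearMap.mem_ker, LinearMap.toSpanSingleton_apply, algebraMap_smul,
      LocalizedModule.smul'_mk, hr0, LocalizedModule.zero_mk]
  have hsurj : Function.Surjective (Submodule.liftQ _ φ hker) := by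
    intro z
    induction z using LocalizedModule.induction_on with
    | h c s =>
      obtain ⟨r, rfl⟩ := Ideal.Quotient.mk_surjective c
      refine ⟨Submodule.Quotient.mk (Localization.mk r s), ?_⟩
      rw [Submodule.liftQ_apply, LinearMap.toSpanSingleton_apply, LocalizedModule.mk_smul_mk,
        mul_one, Algebra.smul_def, mul_one, Ideal.Quotient.algebraMap_eq]
  have : IsSimpleModule A (A ⧸ IsLocalRing.maximalIdeal A) :=
    isSimpleModule_iff_isCoatom.2 (IsLocalRing.maximalIdeal.isMaximal A).out
  rw [lmult_eq_length]
  exact_mod_cast calc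
    length A (pTorsion p.asIdeal (R ⧸ p.asIdeal))
      ≤ length A (LocalizedModule p.asIdeal.primeCompl (R ⧸ p.asIdeal)) :=
        length_le_of_injective _ (Submodule.subtype_injective _)
    _ ≤ length A (A ⧸ IsLocalRing.maximalIdeal A) := length_le_of_surjective _ hsurj
    _ = 1 := length_eq_one _ _

theorem exists_lt_lmult_le_add_quotient [IsNoetherian R M] {L : Submodule R M}
    {p : PrimeSpectrum R} (h : lmult p L < lmult p M) :
    ∃ L' : Submodule R M, L < L' ∧
      ∀ q : PrimeSpectrum R, lmult q L' ≤ lmult q L + lmult q (R ⧸ p.asIdeal) := by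
  have hquot : lmult p (M ⧸ L) ≠ 0 := fun h0 ↦ h.not_ge <| by
    simpa only [h0, add_zero] using
      lmult_le_add_of_exact p L.subtype_injective (LinearMap.exact_subtype_mkQ L)
  obtain ⟨f, hf⟩ := exists_injective_quotient_of_lmult_ne_zero hquot
  let L' := f.range.comap L.mkQ
  have hle : L ≤ L' := L.le_comap_mkQ f.range
  let g : L' →ₗ[R] R ⧸ p.asIdeal :=
    (LinearEquiv.ofInjective f hf).symm.toLinearMap ∘ₗ L.mkQ.submoduleComap f.range
  have hexact : Function.Exact (Submodule.inclusion hle) g := by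
    rw [LinearMap.exact_iff, LinearEquiv.ker_comp, Submodule.range_inclusion]
    ext x
    rw [LinearMap.mem_ker, Subtype.ext_iff]
    exact Submodule.Quotient.mk_eq_zero L
  refine ⟨L', hle.lt_of_not_ge fun hge ↦ ?_, fun q ↦
    lmult_le_add_of_exact q (Submodule.inclusion_injective hle) hexact⟩
  obtain ⟨m, hm⟩ := L.mkQ_surjective (f 1)
  have hmL : L.mkQ m = 0 := by
    rw [Submodule.mkQ_apply, Submodule.Quotient.mk_eq_zero]
    exact hge ⟨1, hm.symm⟩
  exact one_ne_zero (hf (by rw [← hm, hmL, map_zero]))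

end LocalMultiplicity

theorem exists_submodule_lmult_general {R : Type*} [CommRing R]
    (M : Type*) [AddCommGroup M] [Module R M] [IsNoetherian R M] (n : PrimeSpectrum R → ℕ)
    (hle : ∀ p : PrimeSpectrum R, (n p : WithBot ℕ∞) ≤ lmult p M) :
    ∃ N : Submodule R M, ∀ p : PrimeSpectrum R, lmult p N = (n p : WithBot ℕ∞) := by
  obtain ⟨N, hN⟩ := exists_maximal_of_wellFoundedGT
    (fun N : Submodule R M ↦ ∀ p, lmult p N ≤ (n p : WithBot ℕ∞))
    ⟨⊥, fun p ↦ (lmult_eq_zero_of_subsingleton p).trans_le (Nat.cast_nonneg' _)⟩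
  refine ⟨N, fun p ↦ (hN.prop p).eq_of_not_lt fun hlt ↦ ?_⟩
  obtain ⟨N', hNN', hN'⟩ := exists_lt_lmult_le_add_quotient (hlt.trans_le (hle p))
  refine hN.not_prop_of_gt hNN' fun q ↦ (hN' q).trans ?_
  by_cases hqp : q = p
  · subst hqp
    calc lmult q N + lmult q (R ⧸ q.asIdeal)
        ≤ lmult q N + 1 := by gcongr; exact lmult_quotient_le_one q
      _ ≤ n q := by
        rw [lmult_eq_length] at hlt ⊢
        exact_mod_cast Order.add_one_le_of_lt (WithBot.coe_lt_coe.1 hlt)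
  · rw [lmult_quotient_of_ne hqp, add_zero]
    exact hN.prop q

/-- For a finitely generated module `M` without embedded primes over a commutative
Noetherian ring, any prescription of natural numbers `n 𝔭 ≤ ℓ_𝔭(M)`, vanishing at the
non-associated primes, is realized as the collection of local multiplicities of some
submodule `N ⊆ M`. -/
theorem exists_submodule_lmult {R : Type*} [CommRing R] [IsNoetherianRing R]
    (M : Type*) [AddCommGroup M] [Module R M] [Module.Finite R M]
    (hM : ∀ p ∈ associatedPrimes R M, p ∈ (Module.annihilator R M).minimalPrimes)
    (n : Ideal R → ℕ)
    (hle : ∀ p : PrimeSpectrum R, (n p.asIdeal : WithBot ℕ∞) ≤ lmult p M)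
    (h0 : ∀ p : PrimeSpectrum R, p.asIdeal ∉ associatedPrimes R M → n p.asIdeal = 0) :
    ∃ N : Submodule R M, ∀ p : PrimeSpectrum R,
      lmult p N = (n p.asIdeal : WithBot ℕ∞) :=
  exists_submodule_lmult_general M (fun p ↦ n p.asIdeal) hle
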